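/- Let λ > 0 and N∘ ∈ ℕ. There exists an even function Φ∘ ∈ C_c^∞(ℝ) such that Φ∘(s) = 1 for |s| ≤ 1/2, Φ∘(s) = 0 for |s| ≥ 1, and ∫_0^∞ ϱ^λ (d/dϱ)^j Φ̂∘(ϱ) dϱ = 0 for every integer j with 0 ≤ j ≤ N∘ and j ≠ λ. -/

import Mathlib

open MeasureTheory Filter
open scoped ENNReal NNReal RealInnerProductSpace BigOperators Topology

noncomputable section

/-- `ℝ^d` as a Euclidean space. -/
abbrev Euc (d : ℕ) : Type := EuclideanSpace ℝ (Fin d)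

/-- The geometric setup: `Ω` is a bounded open convex subset of `ℝ^d` containing the origin,
`ρ` is its Minkowski functional, which is assumed to be smooth away from the origin and
positive away from the origin. -/
structure IsMinkowskiGauge (d : ℕ) (Ω : Set (Euc d)) (ρ : Euc d → ℝ) : Prop where
  isOpen : IsOpen Ω
  convex : Convex ℝ Ω
  isBounded : Bornology.IsBounded Ω
  zero_mem : (0 : Euc d) ∈ Ω
  eq_gauge : ρ = gauge Ω
  smooth : ContDiffOn ℝ (⊤ : ℕ∞) ρ {(0 : Euc d)}ᶜ
  pos : ∀ ξ : Euc d, ξ ≠ 0 → 0 < ρ ξ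

/-- Everywhere nonvanishing Gaussian curvature of `∂Ω = {ρ = 1}`: for every `ξ ≠ 0`
the Hessian of `ρ` at `ξ` has rank `d - 1`. -/
def HasNonvanishingCurvature (d : ℕ) (ρ : Euc d → ℝ) : Prop :=
  ∀ ξ : Euc d, ξ ≠ 0 →
    LinearMap.rank ((fderiv ℝ (fderiv ℝ ρ) ξ : Euc d →L[ℝ] (Euc d →L[ℝ] ℝ)) :
      Euc d →ₗ[ℝ] (Euc d →L[ℝ] ℝ)) = (d - 1 : ℕ)

/-- The Fourier transform `f̂(ξ) = ∫ f(y) e^{−i⟨y,ξ⟩} dy` on `ℝ^d`. -/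
def FTd {d : ℕ} (f : Euc d → ℂ) (ξ : Euc d) : ℂ :=
  ∫ y : Euc d, f y * Complex.exp (-(Complex.I * (⟪y, ξ⟫ : ℂ)))

/-- The Riesz mean `R^λ_{a,t} f(x) = (2π)^{-d} ∫ (1 - ρ(ξ)^a/t^a)_+^λ f̂(ξ) e^{i⟨x,ξ⟩} dξ`. -/
def RieszMean {d : ℕ} (ρ : Euc d → ℝ) (a lam t : ℝ) (f : Euc d → ℂ) (x : Euc d) : ℂ :=
  (((2 * Real.pi) ^ d)⁻¹ : ℝ) •
    ∫ ξ : Euc d, ((max (1 - ρ ξ ^ a / t ^ a) 0) ^ lam : ℝ) •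
      (FTd f ξ * Complex.exp (Complex.I * (⟪x, ξ⟫ : ℂ)))

/-- The critical index `λ(p) = d(1/p - 1/2) - 1/2`. -/
def criticalIndex (d : ℕ) (p : ℝ) : ℝ := (d : ℝ) * (1 / p - 1 / 2) - 1 / 2

/-- One-dimensional Fourier transform `φ̂(ϱ) = ∫ φ(s) e^{-isϱ} ds`. -/
def FT1 (φ : ℝ → ℂ) (ϱ : ℝ) : ℂ :=
  ∫ s : ℝ, φ s * Complex.exp (-(Complex.I * (s : ℂ) * (ϱ : ℂ)))

/-- One-dimensional Fourier transform of a real-valued function. -/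
def FT1R (Φ : ℝ → ℝ) : ℝ → ℂ := FT1 (fun s => (Φ s : ℂ))

/-- The pieces `h_{λ,ℓ}` of the decomposition of the Riesz multiplier. -/
def hfun (χ Φ Ψ : ℝ → ℝ) (lam : ℝ) : ℕ → ℝ → ℂ
  | 0 => fun ϱ => ((2 * Real.pi)⁻¹ * χ ϱ : ℝ) •
      ∫ u : ℝ, ((max (1 - u) 0) ^ lam : ℝ) • FT1R Φ (ϱ - u)
  | (ℓ + 1) => fun ϱ => ((2 * Real.pi)⁻¹ * χ ϱ : ℝ) •
      ∫ u : ℝ, ((max (1 - u) 0) ^ lam : ℝ) •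
        (((2 : ℝ) ^ ℓ) • FT1R Ψ ((2 : ℝ) ^ ℓ * (ϱ - u)))

/-- The data entering the construction of `h_{λ,ℓ}`: a cutoff `χ ∈ C_c^∞((1/2,2))`, an even
`Φ = Φ∘ ∈ C_c^∞(ℝ)` with `Φ∘ = 1` on `[-1/2,1/2]`, `supp Φ∘ ⊆ [-1,1]`, satisfying the moment
cancellation conditions, and `Ψ(x) = Φ∘(x/2) - Φ∘(x)`. -/
structure HData (lam : ℝ) (N0 : ℕ) (χ Φ Ψ : ℝ → ℝ) : Prop where
  hχsm : ContDiff ℝ (⊤ : ℕ∞) χ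
  hχsupp : Function.support χ ⊆ Set.Ioo (1/2 : ℝ) 2
  hΦsm : ContDiff ℝ (⊤ : ℕ∞) Φ
  hΦeven : ∀ s, Φ (-s) = Φ s
  hΦone : ∀ s : ℝ, |s| ≤ 1/2 → Φ s = 1
  hΦzero : ∀ s : ℝ, 1 ≤ |s| → Φ s = 0
  hΦcanc : ∀ j : ℕ, j ≤ N0 → (j : ℝ) ≠ lam →
    (∫ ϱ in Set.Ioi (0 : ℝ), ((ϱ ^ lam : ℝ) : ℂ) * iteratedDeriv j (FT1R Φ) ϱ) = 0
  hΨ : Ψ = fun x => Φ (x / 2) - Φ x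

/-- Inverse Fourier transform on `ℝ^d`. -/
def invFTd {d : ℕ} (m : Euc d → ℂ) (x : Euc d) : ℂ :=
  (((2 * Real.pi) ^ d)⁻¹ : ℝ) •
    ∫ ξ : Euc d, m ξ * Complex.exp (Complex.I * (⟪x, ξ⟫ : ℂ))

/-- The Fourier multiplier operator `m(D) f = (𝓕⁻¹ m) * f`. -/
def mulOp {d : ℕ} (m : Euc d → ℂ) (f : Euc d → ℂ) (x : Euc d) : ℂ :=
  ∫ y : Euc d, invFTd m (x - y) * f y

/-- The Hardy–Littlewood maximal function. -/
def HLMaximal {d : ℕ} (w : Euc d → ℝ) (x : Euc d) : ℝ≥0∞ :=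
  ⨆ r : {r : ℝ // 0 < r},
    (volume (Metric.ball x r.1))⁻¹ * ∫⁻ y in Metric.ball x r.1, ENNReal.ofReal (w y)

/-- `w` is an `A₁` weight. -/
structure IsA1Weight {d : ℕ} (w : Euc d → ℝ) : Prop where
  nonneg : ∀ x, 0 ≤ w x
  locInt : LocallyIntegrable w volume
  ne_zero : ¬ (w =ᵐ[(volume : Measure (Euc d))] (0 : Euc d → ℝ))
  maximal_le : ∃ C : ℝ, ∀ᵐ x ∂(volume : Measure (Euc d)),
    HLMaximal w x ≤ ENNReal.ofReal (C * w x)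

/-- `w` satisfies a reverse Hölder inequality with exponent `σ`. -/
def IsRH {d : ℕ} (σ : ℝ) (w : Euc d → ℝ) : Prop :=
  ∃ C : ℝ, ∀ (x : Euc d) (r : ℝ), 0 < r →
    ((volume (Metric.ball x r))⁻¹ *
        ∫⁻ y in Metric.ball x r, ENNReal.ofReal (w y) ^ σ) ^ (1 / σ) ≤
      ENNReal.ofReal C *
        ((volume (Metric.ball x r))⁻¹ * ∫⁻ y in Metric.ball x r, ENNReal.ofReal (w y))

/-- The weighted `L^p(w)` (quasi-)norm. -/
def wLpNorm {d : ℕ} (p : ℝ) (w : Euc d → ℝ) (g : Euc d → ℂ) : ℝ≥0∞ :=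
  (∫⁻ x, (‖g x‖₊ : ℝ≥0∞) ^ p * ENNReal.ofReal (w x)) ^ (1 / p)

/-- The weighted weak `L^{p,∞}(w)` (quasi-)norm. -/
def wWeakNorm {d : ℕ} (p : ℝ) (w : Euc d → ℝ) (g : Euc d → ℂ) : ℝ≥0∞ :=
  ⨆ α : {α : ℝ // 0 < α},
    ENNReal.ofReal α.1 *
      (∫⁻ x in {x : Euc d | α.1 < ‖g x‖}, ENNReal.ofReal (w x)) ^ (1 / p)

/-- A (half-open, axes-parallel) cube `x + [0,s)^d` in `ℝ^d`. -/
def IsCube {d : ℕ} (Q : Set (Euc d)) : Prop :=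
  ∃ (x : Euc d) (s : ℝ), 0 < s ∧ Q = {y : Euc d | ∀ i, y i ∈ Set.Ico (x i) (x i + s)}

/-- The average `⟨f⟩_{Q,p} = (|Q|⁻¹ ∫_Q |f|^p)^{1/p}`. -/
def cubeAvg {d : ℕ} (p : ℝ) (Q : Set (Euc d)) (f : Euc d → ℂ) : ℝ≥0∞ :=
  ((volume Q)⁻¹ * ∫⁻ x in Q, (‖f x‖₊ : ℝ≥0∞) ^ p) ^ (1 / p)

/-- A `γ`-sparse (finite) family of cubes. -/
def IsSparseFamily {d : ℕ} (γ : ℝ) (𝔖 : Finset (Set (Euc d))) : Prop :=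
  (∀ Q ∈ 𝔖, IsCube Q) ∧
  ∃ E : Set (Euc d) → Set (Euc d),
    (∀ Q ∈ 𝔖, MeasurableSet (E Q) ∧ E Q ⊆ Q ∧
      ENNReal.ofReal γ * volume Q ≤ volume (E Q)) ∧
    (𝔖 : Set (Set (Euc d))).Pairwise fun Q Q' => Disjoint (E Q) (E Q')

/-- The maximal sparse form `Λ*_{p,q}(f₁,f₂)` (supremum over `1/2`-sparse families). -/
def sparseFormMax {d : ℕ} (p q : ℝ) (f₁ f₂ : Euc d → ℂ) : ℝ≥0∞ :=
  ⨆ 𝔖 : {𝔖 : Finset (Set (Euc d)) // IsSparseFamily (1/2) 𝔖},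
    ∑ Q ∈ 𝔖.1, volume Q * cubeAvg p Q f₁ * cubeAvg q Q f₂

/-- The sparse bound `T ∈ Sp(p,q)`. -/
def SparseBound {d : ℕ} (p q : ℝ) (T : (Euc d → ℂ) → Euc d → ℂ) : Prop :=
  ∃ C : ℝ, ∀ f₁ f₂ : Euc d → ℂ,
    ContDiff ℝ (⊤ : ℕ∞) f₁ → HasCompactSupport f₁ →
    ContDiff ℝ (⊤ : ℕ∞) f₂ → HasCompactSupport f₂ →
    ENNReal.ofReal ‖∫ x, T f₁ x * f₂ x‖ ≤ ENNReal.ofReal C * sparseFormMax p q f₁ f₂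

/-- The exponent `r_*(p, p∘, r∘)`. -/
def rStar (d : ℕ) (p p0 r0 : ℝ) : ℝ :=
  if p ≤ 2 * ((d : ℝ) + 1) / ((d : ℝ) + 3) then
    (((d : ℝ) + 1) / ((d : ℝ) - 1) * (1 - 1 / p))⁻¹
  else
    ((1 / r0 * (((d : ℝ) + 3) / (2 * ((d : ℝ) + 1)) - 1 / p) +
        1 / 2 * (1 / p - 1 / p0)) /
      (((d : ℝ) + 3) / (2 * ((d : ℝ) + 1)) - 1 / p0))⁻¹

/-- The exponent `q_*(p, p∘, r∘)`, the conjugate of `r_*(p, p∘, r∘)`. -/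
def qStar (d : ℕ) (p p0 r0 : ℝ) : ℝ := (1 - 1 / rStar d p p0 r0)⁻¹

/-- The trapezoid `∏_d(λ)` with corners `P₁, P₂, P₃, P₄`. -/
def trapez (d : ℕ) (lam : ℝ) : Set (ℝ × ℝ) :=
  convexHull ℝ
    {((2*lam + (d:ℝ) + 1)/(2*(d:ℝ)), ((d:ℝ) - 2*lam - 1)/(2*(d:ℝ))),
     ((2*lam + (d:ℝ) + 1)/(2*(d:ℝ)),
       ((d:ℝ) - 1)/(2*(d:ℝ)) + lam*((d:ℝ) + 1)/((d:ℝ)*((d:ℝ) - 1))),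
     (((d:ℝ) - 1)/(2*(d:ℝ)) + lam*((d:ℝ) + 1)/((d:ℝ)*((d:ℝ) - 1)),
       (2*lam + (d:ℝ) + 1)/(2*(d:ℝ))),
     (((d:ℝ) - 2*lam - 1)/(2*(d:ℝ)), (2*lam + (d:ℝ) + 1)/(2*(d:ℝ)))}

/-- A dyadic cube `2^k(m + [0,1)^d)`, recorded by its generation `k` and position `m`. -/
structure DyadicCube (d : ℕ) where
  k : ℤ
  m : Fin d → ℤ
deriving DecidableEq

/-- The subset of `ℝ^d` corresponding to a dyadic cube. -/
def DyadicCube.set {d : ℕ} (Q : DyadicCube d) : Set (Euc d) :=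
  {x : Euc d | ∀ i, x i ∈ Set.Ico ((2:ℝ) ^ Q.k * (Q.m i : ℝ)) ((2:ℝ) ^ Q.k * ((Q.m i : ℝ) + 1))}

/-- `μ(𝔔) = Σ_{Q ∈ 𝔔} |Q|`. -/
def dyadicMeasure {d : ℕ} (𝔔 : Finset (DyadicCube d)) : ℝ≥0∞ :=
  ∑ Q ∈ 𝔔, volume Q.set

/-- The class `𝒴_M` of normalized bump functions. -/
def MemYM (M : ℕ) (χ : ℝ → ℂ) : Prop :=
  ContDiff ℝ (M : ℕ∞) χ ∧ Function.support χ ⊆ Set.Ioo (1/2 : ℝ) 2 ∧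
    ∑ ν ∈ Finset.range (M + 1), (⨆ s : ℝ, ‖iteratedDeriv ν χ s‖) ≤ 1

/-- The function `Σ_{j ≥ 1} 2^{j(d+1)/2} m_j(D)[Σ_{Q ∈ 𝔇_j} f_Q]` appearing in `VBR(p,r)`,
where `m_j(ξ) = χ_j(2^j(1 - ρ(ξ)))`. -/
def vbrSum {d : ℕ} (ρ : Euc d → ℝ) (χ : ℕ → ℝ → ℂ) (𝔉 : Finset (DyadicCube d))
    (f : DyadicCube d → Euc d → ℂ) (x : Euc d) : ℂ :=
  Finset.sum ((𝔉.image (fun Q => Q.k)).filter (fun j => 1 ≤ j)) fun (j : ℤ) =>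
    ((2:ℝ) ^ ((j : ℝ) * ((d : ℝ) + 1) / 2)) •
      mulOp (fun ξ => χ j.toNat ((2:ℝ) ^ j * (1 - ρ ξ)))
        (fun y => ∑ Q ∈ 𝔉.filter (fun Q' => Q'.k = j), f Q y) x

/-- The statement `VBR(p,r)`. -/
def VBR (d : ℕ) (ρ : Euc d → ℝ) (p r : ℝ) : Prop :=
  ∃ (M : ℕ) (C : ℝ), 1 ≤ M ∧
    ∀ χ : ℕ → ℝ → ℂ, (∀ j : ℕ, 1 ≤ j → MemYM M (χ j)) →
    ∀ (𝔉 : Finset (DyadicCube d)) (f : DyadicCube d → Euc d → ℂ),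
      (∀ Q ∈ 𝔉, Function.support (f Q) ⊆ closure Q.set) →
      eLpNorm (vbrSum ρ χ 𝔉 f) (ENNReal.ofReal r) volume ≤
        ENNReal.ofReal C *
          (∑ Q ∈ 𝔉, volume Q.set * eLpNorm (f Q) (ENNReal.ofReal p) volume ^ r) ^ (1 / r)

/-- `Hyp(p∘, r∘)`: `VBR(p,r)` holds for all `p ∈ [2(d+1)/(d+3), p∘)`
and all `r ∈ [p, r_*(p,p∘,r∘))`. -/
def Hyp (d : ℕ) (ρ : Euc d → ℝ) (p0 r0 : ℝ) : Prop :=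
  ∀ p r : ℝ, 2 * ((d : ℝ) + 1) / ((d : ℝ) + 3) ≤ p → p < p0 →
    p ≤ r → r < rStar d p p0 r0 → VBR d ρ p r

/-- The operator `A_{λ,ℓ} = 2^{ℓ(λ + (d+1)/2)} h_{λ,ℓ}(ρ(D))`. -/
def Aop {d : ℕ} (ρ : Euc d → ℝ) (h : ℕ → ℝ → ℂ) (lam : ℝ) (ℓ : ℕ)
    (f : Euc d → ℂ) (x : Euc d) : ℂ :=
  ((2:ℝ) ^ ((ℓ : ℝ) * (lam + ((d : ℝ) + 1) / 2))) • mulOp (fun ξ => h ℓ (ρ ξ)) f x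

/-- `𝒜_{s,𝔔} F = Σ_{ℓ ≥ s} Σ_{Q ∈ 𝔔_{ℓ-s}} A_{λ,ℓ}[F_Q 1_Q]`. -/
def AopSum {d : ℕ} (ρ : Euc d → ℝ) (h : ℕ → ℝ → ℂ) (lam : ℝ) (s : ℕ)
    (𝔔 : Finset (DyadicCube d)) (F : DyadicCube d → Euc d → ℂ) (x : Euc d) : ℂ :=
  ∑ Q ∈ 𝔔, Aop ρ h lam (Q.k.toNat + s) (Q.set.indicator (F Q)) x

/-- `Ξ_{s,𝔔}[F,β] = Σ_{ℓ ≥ s} Σ_{Q ∈ 𝔔_{ℓ-s}} β(Q) A_{λ,ℓ}[F_Q 1_Q]`. -/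
def XiSum {d : ℕ} (ρ : Euc d → ℝ) (h : ℕ → ℝ → ℂ) (lam : ℝ) (s : ℕ)
    (𝔔 : Finset (DyadicCube d)) (F : DyadicCube d → Euc d → ℂ)
    (β : DyadicCube d → ℂ) (x : Euc d) : ℂ :=
  ∑ Q ∈ 𝔔, β Q * Aop ρ h lam (Q.k.toNat + s) (Q.set.indicator (F Q)) x

/-- `‖F‖_{ℓ^∞(L^p)} = sup_{Q ∈ 𝔔} ‖F_Q‖_{L^p}`. -/
def supLp {d : ℕ} (p : ℝ) (𝔔 : Finset (DyadicCube d))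
    (F : DyadicCube d → Euc d → ℂ) : ℝ≥0∞ :=
  ⨆ Q ∈ 𝔔, eLpNorm (F Q) (ENNReal.ofReal p) volume

/-- `‖β‖_{ℓ^{r,1}(μ)} = ∫_0^∞ μ({Q ∈ 𝔔 : |β(Q)| > α})^{1/r} dα`. -/
def lorentzNorm {d : ℕ} (r : ℝ) (𝔔 : Finset (DyadicCube d))
    (β : DyadicCube d → ℂ) : ℝ≥0∞ :=
  ∫⁻ α in Set.Ioi (0:ℝ),
    (∑ Q ∈ 𝔔, if α < ‖β Q‖ then volume Q.set else 0) ^ (1 / r)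

open SchwartzMap FourierTransform in
theorem auxFT_schwartz (Φ : ℝ → ℝ) (h1 : ContDiff ℝ (⊤ : ℕ∞) Φ) (h2 : HasCompactSupport Φ) :
    ∃ g : 𝓢(ℝ, ℂ), FT1R Φ = g := by
  have h1' : ContDiff ℝ (⊤ : ℕ∞) (fun s => (Φ s : ℂ)) := Complex.ofRealCLM.contDiff.comp h1
  have h2' : HasCompactSupport (fun s => (Φ s : ℂ)) := h2.comp_left (g := fun x : ℝ => (x : ℂ)) (by simp)
  have hp : (2 * Real.pi)⁻¹ ≠ 0 := by positivity
  refine ⟨compCLMOfContinuousLinearEquiv ℂ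
    (ContinuousLinearEquiv.unitsEquivAut ℝ (Units.mk0 _ hp)) (𝓕 (h2'.toSchwartzMap h1')), ?_⟩
  ext ϱ
  rw [compCLMOfContinuousLinearEquiv_apply, Function.comp_apply, fourier_coe, Real.fourier_eq']
  simp only [FT1R, FT1, smul_eq_mul]
  congr 1
  ext s
  rw [mul_comm]
  congr 2
  simp
  field_simp

open SchwartzMap in
theorem aux_integrable (g : 𝓢(ℝ, ℂ)) (lam : ℝ) (hlam : 0 < lam) (j : ℕ) :
    IntegrableOn (fun ϱ : ℝ => ((ϱ ^ lam : ℝ) : ℂ) * iteratedDeriv j g ϱ) (Set.Ioi 0) := by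
  obtain ⟨k, hk⟩ := exists_nat_ge lam
  have i0 := integrable_pow_mul_iteratedFDeriv (volume : Measure ℝ) g 0 j
  have ik := integrable_pow_mul_iteratedFDeriv (volume : Measure ℝ) g k j
  have hc : Continuous (iteratedDeriv j g) :=
    (g.smooth ⊤).continuous_iteratedDeriv j (by exact_mod_cast le_top)
  refine ((i0.add ik).integrableOn (s := Set.Ioi 0)).mono' ?_ ?_
  · refine Continuous.aestronglyMeasurable ?_
    exact (Complex.continuous_ofReal.comp (Real.continuous_rpow_const hlam.le)).mul hc
  · refine (ae_restrict_iff' measurableSet_Ioi).2 (Eventually.of_forall fun ϱ hϱ => ?_)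
    have hϱ : 0 < ϱ := hϱ
    simp only [norm_iteratedFDeriv_eq_norm_iteratedDeriv, Pi.add_apply, norm_mul,
      Complex.norm_real, Real.norm_eq_abs]
    rw [← add_mul, abs_of_pos (Real.rpow_pos_of_pos hϱ _), abs_of_pos hϱ]
    gcongr
    rcases le_total ϱ 1 with h | h
    · have := Real.rpow_le_one hϱ.le h hlam.le
      have := pow_pos hϱ k
      simp; linarith
    · have := Real.rpow_le_rpow_of_exponent_le h hk
      rw [Real.rpow_natCast] at this
      simp; linarith

def auxMom (lam : ℝ) (j : ℕ) (Φ : ℝ → ℝ) : ℂ :=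
  ∫ ϱ in Set.Ioi (0:ℝ), ((ϱ ^ lam : ℝ) : ℂ) * iteratedDeriv j (FT1R Φ) ϱ

theorem auxFT_scale (Φ : ℝ → ℝ) (h1 : ContDiff ℝ (⊤ : ℕ∞) Φ) (h2 : HasCompactSupport Φ)
    (a b q : ℝ) (hq : 0 < q) (ϱ : ℝ) :
    FT1R (fun s => a * Φ (s / q) + b * Φ s) ϱ
      = ((a * q : ℝ) : ℂ) * FT1R Φ (q * ϱ) + (b : ℂ) * FT1R Φ ϱ := by
  have key : ∀ x : ℝ, Integrable
      (fun s : ℝ => (Φ s : ℂ) * Complex.exp (-(Complex.I * (s : ℂ) * (x : ℂ)))) := by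
    intro x
    apply Continuous.integrable_of_hasCompactSupport
    · have := h1.continuous
      fun_prop
    · exact (h2.comp_left (g := fun x : ℝ => (x : ℂ)) (by simp)).mul_right
  have e1 : (fun s : ℝ => (Φ (s / q) : ℂ) * Complex.exp (-(Complex.I * (s : ℂ) * (ϱ : ℂ))))
      = fun s : ℝ => (fun s : ℝ => (Φ s : ℂ) *
        Complex.exp (-(Complex.I * (s : ℂ) * ((q * ϱ : ℝ) : ℂ)))) (s / q) := by
    ext s
    have : (q : ℂ) ≠ 0 := by exact_mod_cast hq.ne'
    simp only
    congr 2
    push_cast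
    field_simp
  have i1 := (key (q * ϱ)).comp_div hq.ne'
  have e2 := Measure.integral_comp_div (fun s : ℝ => (Φ s : ℂ) *
        Complex.exp (-(Complex.I * (s : ℂ) * ((q * ϱ : ℝ) : ℂ)))) q
  rw [← e1] at e2
  rw [← e1] at i1
  simp only [FT1R, FT1]
  have : ∀ s : ℝ, ((a * Φ (s / q) + b * Φ s : ℝ) : ℂ) *
      Complex.exp (-(Complex.I * (s : ℂ) * (ϱ : ℂ))) =
      (a : ℂ) * ((Φ (s / q) : ℂ) * Complex.exp (-(Complex.I * (s : ℂ) * (ϱ : ℂ)))) +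
      (b : ℂ) * ((Φ s : ℂ) * Complex.exp (-(Complex.I * (s : ℂ) * (ϱ : ℂ)))) := by
    intro s; push_cast; ring
  simp_rw [this]
  rw [integral_add (i1.const_mul _) ((key ϱ).const_mul _), integral_const_mul,
    integral_const_mul, e2, abs_of_pos hq, Complex.real_smul]
  push_cast
  ring

theorem auxMom_scale (lam : ℝ) (hlam : 0 < lam) (j : ℕ) (Φ : ℝ → ℝ)
    (h1 : ContDiff ℝ (⊤ : ℕ∞) Φ) (h2 : HasCompactSupport Φ) (a b q : ℝ) (hq : 0 < q) :
    auxMom lam j (fun s => a * Φ (s / q) + b * Φ s)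
      = ((a * q ^ ((j : ℝ) - lam) + b : ℝ) : ℂ) * auxMom lam j Φ := by
  obtain ⟨g, hg⟩ := auxFT_schwartz Φ h1 h2
  have hFT : FT1R (fun s => a * Φ (s / q) + b * Φ s)
      = (fun ϱ => ((a * q : ℝ) : ℂ) * g (q * ϱ)) + (fun ϱ => (b : ℂ) * g ϱ) := by
    ext ϱ
    rw [auxFT_scale Φ h1 h2 a b q hq, hg]; rfl
  have hgs : ContDiff ℝ (j : ℕ∞) g := g.smooth j
  have hgs' : ContDiff ℝ (j : ℕ∞) (fun ϱ => g (q * ϱ)) := hgs.comp (contDiff_const.mul contDiff_id)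
  have hD : ∀ ϱ, iteratedDeriv j (FT1R (fun s => a * Φ (s / q) + b * Φ s)) ϱ
      = ((a * q * q ^ j : ℝ) : ℂ) * iteratedDeriv j g (q * ϱ) + (b : ℂ) * iteratedDeriv j g ϱ := by
    intro ϱ
    rw [hFT, iteratedDeriv_add (contDiff_const.mul hgs').contDiffAt
      (contDiff_const.mul hgs).contDiffAt, iteratedDeriv_const_mul_field,
      iteratedDeriv_const_mul_field]
    have := congrFun (iteratedDeriv_comp_const_smul hgs q) ϱ
    rw [this, Complex.real_smul]
    push_cast; ring
  set F : ℝ → ℂ := fun ϱ => ((ϱ ^ lam : ℝ) : ℂ) * iteratedDeriv j g ϱ with hF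
  have hFi : IntegrableOn F (Set.Ioi 0) := aux_integrable g lam hlam j
  have hFi' : IntegrableOn (fun x => F (q * x)) (Set.Ioi 0) := by
    rw [integrableOn_Ioi_comp_mul_left_iff _ _ hq]; simpa using hFi
  have hI := integral_comp_mul_left_Ioi F 0 hq
  rw [mul_zero] at hI
  have hc : (a * q * q ^ j * q ^ (-lam)) * q⁻¹ = a * q ^ ((j : ℝ) - lam) := by
    rw [sub_eq_add_neg, Real.rpow_add hq, Real.rpow_natCast]; field_simp
  unfold auxMom
  rw [hg]
  have : ∫ ϱ in Set.Ioi (0:ℝ), ((ϱ ^ lam : ℝ) : ℂ) *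
        iteratedDeriv j (FT1R (fun s => a * Φ (s / q) + b * Φ s)) ϱ
      = ∫ ϱ in Set.Ioi (0:ℝ), (((a * q * q ^ j * q ^ (-lam) : ℝ) : ℂ) * F (q * ϱ)
          + (b : ℂ) * F ϱ) := by
    refine setIntegral_congr_fun measurableSet_Ioi fun ϱ hϱ => ?_
    have hϱ : 0 < ϱ := hϱ
    have hh : (ϱ ^ lam : ℝ) = q ^ (-lam) * (q * ϱ) ^ lam := by
      rw [Real.mul_rpow hq.le hϱ.le, ← mul_assoc, ← Real.rpow_add hq]; simp
    simp only [hF]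
    rw [hD, mul_add]
    congr 1
    · rw [hh]; push_cast; ring
    · ring
  rw [this, integral_add (hFi'.const_mul _) (hFi.const_mul _), integral_const_mul,
    integral_const_mul, hI, Complex.real_smul, Complex.ofReal_add, ← hc]
  push_cast
  ring

theorem aux_exists (lam : ℝ) (hlam : 0 < lam) (S : Finset ℕ) (hS : ∀ j ∈ S, (j : ℝ) ≠ lam) :
    ∀ a : ℝ, 0 < a → a < 1 → ∃ Φ : ℝ → ℝ, ContDiff ℝ (⊤ : ℕ∞) Φ ∧ HasCompactSupport Φ ∧
      (∀ s, Φ (-s) = Φ s) ∧ (∀ s : ℝ, |s| ≤ a → Φ s = 1) ∧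
      (∀ s : ℝ, 1 ≤ |s| → Φ s = 0) ∧ ∀ j ∈ S, auxMom lam j Φ = 0 := by
  induction S using Finset.induction_on with
  | empty =>
    intro a ha ha1
    let f : ContDiffBump (0 : ℝ) := ⟨a, 1, ha, ha1⟩
    refine ⟨f, f.contDiff, f.hasCompactSupport, f.neg, fun s hs => ?_, fun s hs => ?_, by simp⟩
    · exact f.one_of_mem_closedBall (by simpa [f] using hs)
    · exact f.zero_of_le_dist (by simpa [f] using hs)
  | insert k S hk ih =>
    intro a ha ha1
    obtain ⟨b, hab, hb1⟩ := exists_between ha1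
    have hb : 0 < b := ha.trans hab
    obtain ⟨Φ, h1, h2, h3, h4, h5, h6⟩ := ih (fun j hj => hS j (Finset.mem_insert_of_mem hj)) b hb hb1
    set q : ℝ := a / b with hqdef
    have hq : 0 < q := by positivity
    have hq1 : q < 1 := (div_lt_one hb).2 hab
    set w : ℝ := q ^ ((k : ℝ) - lam) with hw
    have hw1 : 1 - w ≠ 0 := by
      intro h
      have hw' : w = 1 := by linarith
      have hne : (k : ℝ) - lam ≠ 0 := sub_ne_zero.2 (hS k (Finset.mem_insert_self _ _))
      rw [hw, ← Real.one_rpow ((k : ℝ) - lam), Real.rpow_left_inj hq.le zero_le_one hne] at hw'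
      exact hq1.ne hw'
    have z1 : ∀ s : ℝ, 1 ≤ |s| → (1 - w)⁻¹ * Φ (s / q) + (-w * (1 - w)⁻¹) * Φ s = 0 := by
      intro s hs
      have : 1 ≤ |s / q| := by
        rw [abs_div, abs_of_pos hq, le_div_iff₀ hq]; linarith
      rw [h5 s hs, h5 _ this]; ring
    refine ⟨fun s => (1 - w)⁻¹ * Φ (s / q) + (-w * (1 - w)⁻¹) * Φ s, ?_, ?_, ?_, ?_, z1, ?_⟩
    · exact (contDiff_const.mul (h1.comp (contDiff_id.div_const q))).add (contDiff_const.mul h1)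
    · refine HasCompactSupport.of_support_subset_isCompact (isCompact_closedBall (0 : ℝ) 1) ?_
      intro s hs
      by_contra hn
      apply hs
      apply z1
      simp at hn
      exact hn.le
    · intro s
      simp only [neg_div, h3]
    · intro s hs
      have : |s / q| ≤ b := by
        rw [abs_div, abs_of_pos hq, div_le_iff₀ hq, hqdef, mul_div_cancel₀ _ hb.ne']; exact hs
      simp only [h4 _ this, h4 s (hs.trans hab.le)]
      field_simp
      ring
    · intro j hj
      rw [auxMom_scale lam hlam j Φ h1 h2 _ _ q hq]
      rcases Finset.mem_insert.1 hj with rfl | hj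
      · rw [← hw]
        have : (1 - w)⁻¹ * w + -w * (1 - w)⁻¹ = 0 := by ring
        rw [this]; simp
      · rw [h6 j hj, mul_zero]

/-- Existence of an even compactly supported smooth `Φ∘`, equal to `1`
on `[-1/2,1/2]`, vanishing off `(-1,1)`, with the moment cancellation conditions. -/
theorem exists_Phi_with_cancellation (lam : ℝ) (hlam : 0 < lam) (N0 : ℕ) :
    ∃ Φ : ℝ → ℝ, ContDiff ℝ (⊤ : ℕ∞) Φ ∧ HasCompactSupport Φ ∧
      (∀ s, Φ (-s) = Φ s) ∧ (∀ s : ℝ, |s| ≤ 1/2 → Φ s = 1) ∧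
      (∀ s : ℝ, 1 ≤ |s| → Φ s = 0) ∧
      ∀ j : ℕ, j ≤ N0 → (j : ℝ) ≠ lam →
        (∫ ϱ in Set.Ioi (0:ℝ), ((ϱ ^ lam : ℝ) : ℂ) * iteratedDeriv j (FT1R Φ) ϱ) = 0 := by
  classical
  obtain ⟨Φ, h1, h2, h3, h4, h5, h6⟩ := aux_exists lam hlam
    ((Finset.range (N0 + 1)).filter fun j : ℕ => (j : ℝ) ≠ lam)
    (fun j hj => (Finset.mem_filter.1 hj).2) (1 / 2) (by norm_num) (by norm_num)
  refine ⟨Φ, h1, h2, h3, h4, h5, fun j hj hne => ?_⟩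
  exact h6 j (Finset.mem_filter.2 ⟨Finset.mem_range.2 (by omega), hne⟩)
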